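/- The classical-limit (q = 1) operators satisfy the defining relations of the Lie superalgebra gl(2/1): [E11, E22] = [E11, E33] = [E22, E33] = 0; [E11, E12] = E12, [E22, E12] = −E12, [E22, E23] = E23, [E33, E23] = −E23, [E11, E21] = −E21, [E22, E21] = E21, [E22, E32] = −E32, [E33, E32] = E32, [E11, E23] = [E11, E32] = 0; [E12, E32] = 0 and [E21, E23] = 0; E12 E21 − E21 E12 = E11 − E22 and E23 E32 + E32 E23 = E22 + E33 as operators; and E23 ∘ E23 = 0, E32 ∘ E32 = 0. Hence these operators define a finite-dimensional representation of gl(2/1), and the matrix elements of the U_q[gl(2/1)] representation reduce to it at q = 1. -/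

import Mathlib

/-!
Both sides of every relation are linear, so it suffices to compare them on the basis vectors
`v(k, x)` (`ext_bv`). The defining formulas are assumed only for `x` in range, but they hold for
every integer `x` with `bv k x = 0` out of range: whenever the source vector is out of range and a
target vector is not, the coefficient contains the square root of zero (lemmas `E12_bv`, ...,
`E32_bv_three`). Each relation therefore becomes an identity between scalar coefficients.

Write `a = x - m23 + 1`, `b = m13 - x`, `d = m13 - m23`, so `a + b = d + 1`, and `a, b, d ≥ 0` for
every `x` in range. Splitting the square roots into `√a, √b, √d, √(d + 1)`, the identities become
algebraic; for `{E23, E32} = E22 + E33` the one that matters is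
`a (m23 + m33) + b (m13 + m33 + 1) = (d + 1) (m23 + m33 + b)`.
When `d = 0`, sector `2` is empty, division by `√d` gives zero, and the coefficients concerned
vanish since then `b = 0` (sector `0`) or `a = 0` (sector `3`).
-/

noncomputable section

/-- The triple `(m12, m22, m32)` attached to the sector `k ∈ {0,1,2,3}`. -/
def trip (m13 m23 m33 : ℤ) : Fin 4 → ℤ × ℤ × ℤ
  | 0 => (m13, m23, m33)
  | 1 => (m13, m23 - 1, m33 + 1)
  | 2 => (m13 - 1, m23, m33 + 1)
  | 3 => (m13 - 1, m23 - 1, m33 + 2)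

def M12 (m13 m23 m33 : ℤ) (k : Fin 4) : ℤ := (trip m13 m23 m33 k).1
def M22 (m13 m23 m33 : ℤ) (k : Fin 4) : ℤ := (trip m13 m23 m33 k).2.1
def M32 (m13 m23 m33 : ℤ) (k : Fin 4) : ℤ := (trip m13 m23 m33 k).2.2

/-- `m11` is in the allowed range `m22 ≤ m11 ≤ m12` of the sector `k`. -/
def InR (m13 m23 m33 : ℤ) (k : Fin 4) (x : ℤ) : Prop :=
  M22 m13 m23 m33 k ≤ x ∧ x ≤ M12 m13 m23 m33 k

instance (m13 m23 m33 : ℤ) (k : Fin 4) (x : ℤ) : Decidable (InR m13 m23 m33 k x) :=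
  instDecidableAnd

/-- The index set of the basis `v(k, m11)` of `W`. -/
abbrev Idx (m13 m23 m33 : ℤ) : Type :=
  {p : Fin 4 × ℤ // InR m13 m23 m33 p.1 p.2}

/-- The module `W`, realized as the free complex vector space on the basis
`v(k, m11)`, `k ∈ {0,1,2,3}`, `m22 ≤ m11 ≤ m12`. -/
abbrev Wsp (m13 m23 m33 : ℤ) : Type := Idx m13 m23 m33 →₀ ℂ

/-- The basis vector `v(k, m11)` (zero if `m11` is out of range). -/
def bv (m13 m23 m33 : ℤ) (k : Fin 4) (x : ℤ) : Wsp m13 m23 m33 :=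
  if h : InR m13 m23 m33 k x then Finsupp.single ⟨(k, x), h⟩ 1 else 0

/-- The classical limit (`q = 1`) of the Gel'fand--Zetlin realization of the
induced module `W([m13,m23,m33])` of `gl(2/1)`: seven linear operators acting
on the basis `v(k, m11)` by the `q = 1` specialization of the
induced-representation formulas (terms with `m11` out of range being `0`). -/
structure GZ1 (m13 m23 m33 : ℤ) where
  E11 : Wsp m13 m23 m33 →ₗ[ℂ] Wsp m13 m23 m33
  E22 : Wsp m13 m23 m33 →ₗ[ℂ] Wsp m13 m23 m33
  E33 : Wsp m13 m23 m33 →ₗ[ℂ] Wsp m13 m23 m33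
  E12 : Wsp m13 m23 m33 →ₗ[ℂ] Wsp m13 m23 m33
  E21 : Wsp m13 m23 m33 →ₗ[ℂ] Wsp m13 m23 m33
  E23 : Wsp m13 m23 m33 →ₗ[ℂ] Wsp m13 m23 m33
  E32 : Wsp m13 m23 m33 →ₗ[ℂ] Wsp m13 m23 m33
  hE11 : ∀ (k : Fin 4) (x : ℤ), InR m13 m23 m33 k x →
    E11 (bv m13 m23 m33 k x) = (x : ℂ) • bv m13 m23 m33 k x
  hE22 : ∀ (k : Fin 4) (x : ℤ), InR m13 m23 m33 k x →
    E22 (bv m13 m23 m33 k x) =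
      ((M12 m13 m23 m33 k + M22 m13 m23 m33 k - x : ℤ) : ℂ) • bv m13 m23 m33 k x
  hE33 : ∀ (k : Fin 4) (x : ℤ), InR m13 m23 m33 k x →
    E33 (bv m13 m23 m33 k x) = ((M32 m13 m23 m33 k : ℤ) : ℂ) • bv m13 m23 m33 k x
  hE12 : ∀ (k : Fin 4) (x : ℤ), InR m13 m23 m33 k x →
    E12 (bv m13 m23 m33 k x) =
      ((Real.sqrt (((M12 m13 m23 m33 k - x : ℤ) : ℝ) *
          ((x - M22 m13 m23 m33 k + 1 : ℤ) : ℝ)) : ℝ) : ℂ) • bv m13 m23 m33 k (x + 1)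
  hE21 : ∀ (k : Fin 4) (x : ℤ), InR m13 m23 m33 k x →
    E21 (bv m13 m23 m33 k x) =
      ((Real.sqrt (((M12 m13 m23 m33 k - x + 1 : ℤ) : ℝ) *
          ((x - M22 m13 m23 m33 k : ℤ) : ℝ)) : ℝ) : ℂ) • bv m13 m23 m33 k (x - 1)
  hE23₀ : ∀ x : ℤ, InR m13 m23 m33 0 x → E23 (bv m13 m23 m33 0 x) = 0
  hE23₁ : ∀ x : ℤ, InR m13 m23 m33 1 x →
    E23 (bv m13 m23 m33 1 x) =
      ((Real.sqrt (((x - m23 + 1 : ℤ) : ℝ) / ((m13 - m23 + 1 : ℤ) : ℝ)) *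
          ((m23 + m33 : ℤ) : ℝ) : ℝ) : ℂ) • bv m13 m23 m33 0 x
  hE23₂ : ∀ x : ℤ, InR m13 m23 m33 2 x →
    E23 (bv m13 m23 m33 2 x) =
      ((Real.sqrt (((m13 - x : ℤ) : ℝ) / ((m13 - m23 : ℤ) : ℝ)) *
          ((m13 + m33 + 1 : ℤ) : ℝ) : ℝ) : ℂ) • bv m13 m23 m33 0 x
  hE23₃ : ∀ x : ℤ, InR m13 m23 m33 3 x →
    E23 (bv m13 m23 m33 3 x) =
      ((Real.sqrt (((m13 - x : ℤ) : ℝ) / ((m13 - m23 + 1 : ℤ) : ℝ)) *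
          ((m13 + m33 + 1 : ℤ) : ℝ) : ℝ) : ℂ) • bv m13 m23 m33 1 x
        - ((Real.sqrt (((x - m23 + 1 : ℤ) : ℝ) * ((m13 - m23 : ℤ) : ℝ)) *
            (((m23 + m33 : ℤ) : ℝ) / ((m13 - m23 + 1 : ℤ) : ℝ)) : ℝ) : ℂ) •
              bv m13 m23 m33 2 x
  hE32₀ : ∀ x : ℤ, InR m13 m23 m33 0 x →
    E32 (bv m13 m23 m33 0 x) =
      ((Real.sqrt (((x - m23 + 1 : ℤ) : ℝ) / ((m13 - m23 + 1 : ℤ) : ℝ)) : ℝ) : ℂ) •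
          bv m13 m23 m33 1 x
        + ((Real.sqrt (((m13 - x : ℤ) : ℝ) * ((m13 - m23 : ℤ) : ℝ)) /
            ((m13 - m23 + 1 : ℤ) : ℝ) : ℝ) : ℂ) • bv m13 m23 m33 2 x
  hE32₁ : ∀ x : ℤ, InR m13 m23 m33 1 x →
    E32 (bv m13 m23 m33 1 x) =
      ((Real.sqrt (((m13 - x : ℤ) : ℝ) / ((m13 - m23 + 1 : ℤ) : ℝ)) : ℝ) : ℂ) •
        bv m13 m23 m33 3 x
  hE32₂ : ∀ x : ℤ, InR m13 m23 m33 2 x →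
    E32 (bv m13 m23 m33 2 x) =
      -(((Real.sqrt (((x - m23 + 1 : ℤ) : ℝ) / ((m13 - m23 : ℤ) : ℝ)) : ℝ) : ℂ) •
        bv m13 m23 m33 3 x)
  hE32₃ : ∀ x : ℤ, InR m13 m23 m33 3 x → E32 (bv m13 m23 m33 3 x) = 0

section Formulas

variable {m13 m23 m33 : ℤ}

lemma bv_of_not {k : Fin 4} {x : ℤ} (h : ¬ InR m13 m23 m33 k x) : bv m13 m23 m33 k x = 0 :=
  dif_neg h

/-- Linear maps on `W` are determined by their values on the basis `v(k, m11)`. -/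
lemma ext_bv {f g : Wsp m13 m23 m33 →ₗ[ℂ] Wsp m13 m23 m33}
    (h : ∀ k x, InR m13 m23 m33 k x → f (bv m13 m23 m33 k x) = g (bv m13 m23 m33 k x)) :
    f = g := by
  refine Finsupp.lhom_ext' fun i => LinearMap.ext_ring ?_
  obtain ⟨⟨k, x⟩, hi⟩ := i
  have := h k x hi
  rwa [bv, dif_pos hi] at this

lemma inR_zero {x : ℤ} : InR m13 m23 m33 0 x ↔ m23 ≤ x ∧ x ≤ m13 := Iff.rfl
lemma inR_one {x : ℤ} : InR m13 m23 m33 1 x ↔ m23 - 1 ≤ x ∧ x ≤ m13 := Iff.rfl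
lemma inR_two {x : ℤ} : InR m13 m23 m33 2 x ↔ m23 ≤ x ∧ x ≤ m13 - 1 := Iff.rfl
lemma inR_three {x : ℤ} : InR m13 m23 m33 3 x ↔ m23 - 1 ≤ x ∧ x ≤ m13 - 1 := Iff.rfl

/-- A term `c • v(k, x)` is zero if `x` is out of range or `c` is zero. -/
lemma smul_bv_eq_zero {k : Fin 4} {x : ℤ} {c : ℂ} (h : InR m13 m23 m33 k x → c = 0) :
    c • bv m13 m23 m33 k x = 0 := by
  by_cases hx : InR m13 m23 m33 k x
  · rw [h hx, zero_smul]
  · rw [bv_of_not hx, smul_zero]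

/-! ### The action on basis vectors, without range hypotheses -/

variable (R : GZ1 m13 m23 m33) (k : Fin 4) (x : ℤ)

lemma E11_bv : R.E11 (bv m13 m23 m33 k x) = (x : ℂ) • bv m13 m23 m33 k x := by
  by_cases h : InR m13 m23 m33 k x
  · exact R.hE11 k x h
  · simp [bv_of_not h]

lemma E22_bv : R.E22 (bv m13 m23 m33 k x) =
    ((M12 m13 m23 m33 k : ℂ) + M22 m13 m23 m33 k - x) • bv m13 m23 m33 k x := by
  by_cases h : InR m13 m23 m33 k x
  · simpa using R.hE22 k x h
  · simp [bv_of_not h]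

lemma E33_bv : R.E33 (bv m13 m23 m33 k x) =
    (M32 m13 m23 m33 k : ℂ) • bv m13 m23 m33 k x := by
  by_cases h : InR m13 m23 m33 k x
  · exact R.hE33 k x h
  · simp [bv_of_not h]

/-- Outside the range, the right-hand side can only survive at `x + 1 = m22`, where the
coefficient vanishes. -/
lemma E12_bv : R.E12 (bv m13 m23 m33 k x) =
    (√(((M12 m13 m23 m33 k : ℝ) - x) * (x - M22 m13 m23 m33 k + 1)) : ℂ) •
      bv m13 m23 m33 k (x + 1) := by
  by_cases h : InR m13 m23 m33 k x
  · simpa using R.hE12 k x h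
  · rw [bv_of_not h, map_zero, smul_bv_eq_zero]
    intro h'
    have : x = M22 m13 m23 m33 k - 1 := by unfold InR at *; omega
    simp [this]

lemma E21_bv : R.E21 (bv m13 m23 m33 k x) =
    (√(((M12 m13 m23 m33 k : ℝ) - x + 1) * (x - M22 m13 m23 m33 k)) : ℂ) •
      bv m13 m23 m33 k (x - 1) := by
  by_cases h : InR m13 m23 m33 k x
  · simpa using R.hE21 k x h
  · rw [bv_of_not h, map_zero, smul_bv_eq_zero]
    intro h'
    have : x = M12 m13 m23 m33 k + 1 := by unfold InR at *; omega
    simp [this]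

lemma E23_bv_zero : R.E23 (bv m13 m23 m33 0 x) = 0 := by
  by_cases h : InR m13 m23 m33 0 x
  · exact R.hE23₀ x h
  · simp [bv_of_not h]

lemma E23_bv_one : R.E23 (bv m13 m23 m33 1 x) =
    ((√((x - m23 + 1 : ℝ) / (m13 - m23 + 1)) * (m23 + m33) : ℝ) : ℂ) • bv m13 m23 m33 0 x := by
  by_cases h : InR m13 m23 m33 1 x
  · simpa using R.hE23₁ x h
  · rw [bv_of_not h, map_zero, smul_bv_eq_zero]
    intro h'
    rw [inR_zero] at *; rw [inR_one] at *; omega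

lemma E23_bv_two : R.E23 (bv m13 m23 m33 2 x) =
    ((√((m13 - x : ℝ) / (m13 - m23)) * (m13 + m33 + 1) : ℝ) : ℂ) • bv m13 m23 m33 0 x := by
  by_cases h : InR m13 m23 m33 2 x
  · simpa using R.hE23₂ x h
  · rw [bv_of_not h, map_zero, smul_bv_eq_zero]
    intro h'
    have : x = m13 := by rw [inR_zero] at *; rw [inR_two] at *; omega
    simp [this]

lemma E23_bv_three : R.E23 (bv m13 m23 m33 3 x) =
    ((√((m13 - x : ℝ) / (m13 - m23 + 1)) * (m13 + m33 + 1) : ℝ) : ℂ) • bv m13 m23 m33 1 x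
    - ((√((x - m23 + 1 : ℝ) * (m13 - m23)) * ((m23 + m33) / (m13 - m23 + 1)) : ℝ) : ℂ) •
      bv m13 m23 m33 2 x := by
  by_cases h : InR m13 m23 m33 3 x
  · simpa using R.hE23₃ x h
  · rw [bv_of_not h, map_zero, smul_bv_eq_zero, smul_bv_eq_zero, sub_zero]
    · intro h'
      rw [inR_two] at *; rw [inR_three] at *; omega
    · intro h'
      have : x = m13 := by rw [inR_one] at *; rw [inR_three] at *; omega
      simp [this]

lemma E32_bv_zero : R.E32 (bv m13 m23 m33 0 x) =
    (√((x - m23 + 1 : ℝ) / (m13 - m23 + 1)) : ℂ) • bv m13 m23 m33 1 x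
    + ((√((m13 - x : ℝ) * (m13 - m23)) / (m13 - m23 + 1) : ℝ) : ℂ) • bv m13 m23 m33 2 x := by
  by_cases h : InR m13 m23 m33 0 x
  · simpa using R.hE32₀ x h
  · rw [bv_of_not h, map_zero, smul_bv_eq_zero, smul_bv_eq_zero, add_zero]
    · intro h'
      rw [inR_two] at *; rw [inR_zero] at *; omega
    · intro h'
      have : x = m23 - 1 := by rw [inR_one] at *; rw [inR_zero] at *; omega
      simp [this]

lemma E32_bv_one : R.E32 (bv m13 m23 m33 1 x) =
    (√((m13 - x : ℝ) / (m13 - m23 + 1)) : ℂ) • bv m13 m23 m33 3 x := by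
  by_cases h : InR m13 m23 m33 1 x
  · simpa using R.hE32₁ x h
  · rw [bv_of_not h, map_zero, smul_bv_eq_zero]
    intro h'
    rw [inR_three] at *; rw [inR_one] at *; omega

lemma E32_bv_two : R.E32 (bv m13 m23 m33 2 x) =
    -((√((x - m23 + 1 : ℝ) / (m13 - m23)) : ℂ) • bv m13 m23 m33 3 x) := by
  by_cases h : InR m13 m23 m33 2 x
  · simpa using R.hE32₂ x h
  · rw [bv_of_not h, map_zero, smul_bv_eq_zero, neg_zero]
    intro h'
    have : x = m23 - 1 := by rw [inR_three] at *; rw [inR_two] at *; omega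
    simp [this]

lemma E32_bv_three : R.E32 (bv m13 m23 m33 3 x) = 0 := by
  by_cases h : InR m13 m23 m33 3 x
  · exact R.hE32₃ x h
  · simp [bv_of_not h]

/-- Across all sectors, `m11` lies between `m23 - 1` and `m13`. -/
lemma bounds {k : Fin 4} {x : ℤ} (h : InR m13 m23 m33 k x) : 0 ≤ x - m23 + 1 ∧ 0 ≤ m13 - x := by
  fin_cases k <;> simp [InR, M12, M22, trip] at h <;> omega

lemma sqrt_facts {k : Fin 4} {x : ℤ} (h : InR m13 m23 m33 k x) :
    (√(x - m23 + 1 : ℝ) : ℂ) ^ 2 = x - m23 + 1 ∧ (√(m13 - x : ℝ) : ℂ) ^ 2 = m13 - x := by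
  obtain ⟨ha, hb⟩ := bounds h
  have ha' : (0 : ℝ) ≤ x - m23 + 1 := by exact_mod_cast ha
  have hb' : (0 : ℝ) ≤ m13 - x := by exact_mod_cast hb
  exact ⟨by exact_mod_cast Real.sq_sqrt ha', by exact_mod_cast Real.sq_sqrt hb'⟩

/-- Division by `√(m13 - m23)` is legitimate as soon as sector `2` is nonempty. -/
lemma sqrt_d_ne (h : m23 < m13) : (√(m13 - m23 : ℝ) : ℂ) ≠ 0 := by
  have h' : (0 : ℝ) < m13 - m23 := by exact_mod_cast sub_pos.2 h
  exact_mod_cast (Real.sqrt_pos.2 h').ne'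

end Formulas

/-- The classical-limit (`q = 1`) operators satisfy the defining
relations of the Lie superalgebra `gl(2/1)`:
`[E11,E22] = [E11,E33] = [E22,E33] = 0`; `[E11,E12] = E12`, `[E22,E12] = −E12`,
`[E22,E23] = E23`, `[E33,E23] = −E23`, `[E11,E21] = −E21`, `[E22,E21] = E21`,
`[E22,E32] = −E32`, `[E33,E32] = E32`, `[E11,E23] = [E11,E32] = 0`;
`[E12,E32] = 0` and `[E21,E23] = 0`; `E12 E21 − E21 E12 = E11 − E22` and
`E23 E32 + E32 E23 = E22 + E33` as operators; and `E23 ∘ E23 = 0`,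
`E32 ∘ E32 = 0`. Hence these operators define a finite-dimensional
representation of `gl(2/1)`. -/
theorem stmt_16 (m13 m23 m33 : ℤ) (hm : m23 ≤ m13) (R : GZ1 m13 m23 m33) :
    R.E11 ∘ₗ R.E22 - R.E22 ∘ₗ R.E11 = 0 ∧
    R.E11 ∘ₗ R.E33 - R.E33 ∘ₗ R.E11 = 0 ∧
    R.E22 ∘ₗ R.E33 - R.E33 ∘ₗ R.E22 = 0 ∧
    R.E11 ∘ₗ R.E12 - R.E12 ∘ₗ R.E11 = R.E12 ∧
    R.E22 ∘ₗ R.E12 - R.E12 ∘ₗ R.E22 = -R.E12 ∧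
    R.E22 ∘ₗ R.E23 - R.E23 ∘ₗ R.E22 = R.E23 ∧
    R.E33 ∘ₗ R.E23 - R.E23 ∘ₗ R.E33 = -R.E23 ∧
    R.E11 ∘ₗ R.E21 - R.E21 ∘ₗ R.E11 = -R.E21 ∧
    R.E22 ∘ₗ R.E21 - R.E21 ∘ₗ R.E22 = R.E21 ∧
    R.E22 ∘ₗ R.E32 - R.E32 ∘ₗ R.E22 = -R.E32 ∧
    R.E33 ∘ₗ R.E32 - R.E32 ∘ₗ R.E33 = R.E32 ∧
    R.E11 ∘ₗ R.E23 - R.E23 ∘ₗ R.E11 = 0 ∧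
    R.E11 ∘ₗ R.E32 - R.E32 ∘ₗ R.E11 = 0 ∧
    R.E12 ∘ₗ R.E32 - R.E32 ∘ₗ R.E12 = 0 ∧
    R.E21 ∘ₗ R.E23 - R.E23 ∘ₗ R.E21 = 0 ∧
    R.E12 ∘ₗ R.E21 - R.E21 ∘ₗ R.E12 = R.E11 - R.E22 ∧
    R.E23 ∘ₗ R.E32 + R.E32 ∘ₗ R.E23 = R.E22 + R.E33 ∧
    R.E23 ∘ₗ R.E23 = 0 ∧
    R.E32 ∘ₗ R.E32 = 0 := by
  have hd : (0 : ℝ) ≤ m13 - m23 := by exact_mod_cast sub_nonneg.2 hm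
  have hd1 : (0 : ℝ) ≤ m13 - m23 + 1 := by linarith
  have hP : (√(m13 - m23 + 1 : ℝ) : ℂ) ^ 2 = m13 - m23 + 1 := by
    exact_mod_cast Real.sq_sqrt hd1
  -- Unlike `√(m13 - m23)`, this square root is invertible for all admissible labels.
  have hP0 : (√(m13 - m23 + 1 : ℝ) : ℂ) ≠ 0 := by
    exact_mod_cast (Real.sqrt_pos.2 (add_pos_of_nonneg_of_pos hd one_pos)).ne'
  have hd0 : (m13 - m23 + 1 : ℂ) ≠ 0 := hP ▸ pow_ne_zero 2 hP0
  refine ⟨?_, ?_, ?_, ?_, ?_, ?_, ?_, ?_, ?_, ?_, ?_, ?_, ?_, ?_, ?_, ?_, ?_, ?_, ?_⟩ <;>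
    refine ext_bv fun k x hx => ?_
  iterate 5
    · simp only [LinearMap.sub_apply, LinearMap.comp_apply, LinearMap.zero_apply,
        LinearMap.neg_apply, map_smul, E11_bv, E22_bv, E33_bv, E12_bv]
      match_scalars
      ring
  iterate 2
    · fin_cases k <;>
      simp [E22_bv, E33_bv, E23_bv_zero, E23_bv_one, E23_bv_two, E23_bv_three,
        M12, M22, M32, trip] <;> match_scalars <;> ring
  iterate 2
    · simp only [LinearMap.sub_apply, LinearMap.comp_apply, LinearMap.neg_apply, map_smul,
        E11_bv, E22_bv, E21_bv]
      match_scalars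
      ring
  iterate 2
    · fin_cases k <;>
      simp [E22_bv, E33_bv, E32_bv_zero, E32_bv_one, E32_bv_two, E32_bv_three,
        M12, M22, M32, trip] <;> match_scalars <;> ring
  · fin_cases k <;>
      simp [E11_bv, E23_bv_zero, E23_bv_one, E23_bv_two, E23_bv_three] <;> match_scalars <;> ring
  · fin_cases k <;>
      simp [E11_bv, E32_bv_zero, E32_bv_one, E32_bv_two, E32_bv_three] <;> match_scalars <;> ring
  -- `[E12, E32] = 0`: in every sector `0 ≤ m11 - m23 + 1`, so all square roots of products split,
  -- although the other factor may be negative in a term that leaves the range.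
  · have ha : (0 : ℝ) ≤ x - m23 + 1 := by exact_mod_cast (bounds hx).1
    have ha' : (0 : ℝ) ≤ x + 1 - m23 + 1 := by linarith
    have e1 : (x - (m23 - 1) + 1 : ℝ) = x + 1 - m23 + 1 := by ring
    have e2 : (m13 - 1 - x : ℝ) = m13 - (x + 1) := by ring
    fin_cases k <;>
      simp [E12_bv, E32_bv_zero, E32_bv_one, E32_bv_two, E32_bv_three, M12, M22, trip] <;>
      match_scalars <;>
      simp only [Complex.coe_algebraMap, e1, e2, Real.sqrt_div' _ hd, Real.sqrt_div' _ hd1,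
        Real.sqrt_mul' _ hd, Real.sqrt_mul' _ ha, Real.sqrt_mul' _ ha', Complex.ofReal_mul,
        Complex.ofReal_div] <;>
      ring
  -- `[E21, E23] = 0`: the same, splitting along the nonnegative factors `m13 - m11 (+ 1)`.
  · have hb : (0 : ℝ) ≤ m13 - x := by exact_mod_cast (bounds hx).2
    have hb' : (0 : ℝ) ≤ m13 - x + 1 := by linarith
    have e1 : (x - 1 - m23 + 1 : ℝ) = x - m23 := by ring
    have e2 : (x - (m23 - 1) : ℝ) = x - m23 + 1 := by ring
    have e3 : (m13 - 1 - x + 1 : ℝ) = m13 - x := by ring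
    have e4 : (m13 - (x - 1) : ℝ) = m13 - x + 1 := by ring
    fin_cases k <;>
      simp [E21_bv, E23_bv_zero, E23_bv_one, E23_bv_two, E23_bv_three, M12, M22, trip] <;>
      match_scalars <;>
      simp only [Complex.coe_algebraMap, e1, e2, e3, e4, Real.sqrt_div' _ hd, Real.sqrt_div' _ hd1,
        Real.sqrt_mul' _ hd, Real.sqrt_mul hb, Real.sqrt_mul hb', Complex.ofReal_mul,
        Complex.ofReal_div] <;>
      ring
  · have h1 : (0 : ℝ) ≤ x - M22 m13 m23 m33 k := by
      have := hx.1
      exact_mod_cast sub_nonneg.2 this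
    have h2 : (0 : ℝ) ≤ M12 m13 m23 m33 k - x := by
      have := hx.2
      exact_mod_cast sub_nonneg.2 this
    simp [E12_bv, E21_bv, E11_bv, E22_bv]
    match_scalars
    have e1 : (M12 m13 m23 m33 k - (x - 1) : ℝ) = M12 m13 m23 m33 k - x + 1 := by ring
    have e2 : (x - 1 - M22 m13 m23 m33 k + 1 : ℝ) = x - M22 m13 m23 m33 k := by ring
    have e3 : (M12 m13 m23 m33 k - (x + 1) + 1 : ℝ) = M12 m13 m23 m33 k - x := by ring
    have e4 : (x + 1 - M22 m13 m23 m33 k : ℝ) = x - M22 m13 m23 m33 k + 1 := by ring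
    rw [e1, e2, e3, e4]
    simp only [Complex.coe_algebraMap]
    rw [mul_one, mul_one, ← Complex.ofReal_mul, ← Complex.ofReal_mul,
      Real.mul_self_sqrt (by positivity), Real.mul_self_sqrt (by positivity)]
    push_cast
    ring
  · obtain ⟨hA, hB⟩ := sqrt_facts hx
    fin_cases k <;>
      simp [E22_bv, E33_bv, E23_bv_zero, E23_bv_one, E23_bv_two, E23_bv_three, E32_bv_zero,
        E32_bv_one, E32_bv_two, E32_bv_three, M12, M22, M32, trip] <;>
      match_scalars <;>
      simp only [Complex.coe_algebraMap, Real.sqrt_div' _ hd, Real.sqrt_div' _ hd1,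
        Real.sqrt_mul' _ hd, Complex.ofReal_mul, Complex.ofReal_div]
    -- If `m13 = m23`, the coefficient of the empty sector `2` carries the factor `√(m13 - m11) = 0`.
    · rcases hm.eq_or_lt with rfl | hlt
      · obtain rfl : x = m23 := le_antisymm hx.2 hx.1
        simp
      · have hD0 := sqrt_d_ne hlt
        grind
    · grind
    · grind
    · grind
    · have hD0 := sqrt_d_ne (m13 := m13) (m23 := m23) (by have := inR_two.1 hx; omega)
      grind
    -- In sector `3` with `m13 = m23`, the vanishing factor is `√(m11 - m23 + 1)`.
    · rcases hm.eq_or_lt with rfl | hlt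
      · obtain rfl : x = m23 - 1 := le_antisymm hx.2 hx.1
        simp
        ring
      · have hD0 := sqrt_d_ne hlt
        grind
  · fin_cases k <;>
      simp [E23_bv_zero, E23_bv_one, E23_bv_two, E23_bv_three]
    match_scalars
    simp only [Complex.coe_algebraMap, Real.sqrt_div' _ hd, Real.sqrt_div' _ hd1,
      Real.sqrt_mul' _ hd, Complex.ofReal_mul, Complex.ofReal_div]
    rcases hm.eq_or_lt with rfl | hlt
    · obtain rfl : x = m23 - 1 := le_antisymm hx.2 hx.1
      simp
    · have hD0 := sqrt_d_ne hlt
      grind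
  · fin_cases k <;>
      simp [E32_bv_zero, E32_bv_one, E32_bv_two, E32_bv_three]
    match_scalars
    simp only [Complex.coe_algebraMap, Real.sqrt_div' _ hd, Real.sqrt_div' _ hd1,
      Real.sqrt_mul' _ hd, Complex.ofReal_mul, Complex.ofReal_div]
    rcases hm.eq_or_lt with rfl | hlt
    · obtain rfl : x = m23 := le_antisymm hx.2 hx.1
      simp
    · have hD0 := sqrt_d_ne hlt
      grind
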